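/- Let W : ℝ × E → E be C¹ and define its 2-form Lie derivative d_L² W (t, x) := ∂W/∂t(t, x) + D_x W(t, x)(u(t, x)) + (div u)(t, x) · W(t, x) − D_x u(t, x)(W(t, x)). Then d_L² W ≡ 0 if and only if (det F(t, X)) · W(t, φ(t, X)) = F(t, X)(W(0, X)) for all (t, X), where det F(t, X) denotes the determinant of the linear map F(t, X); i.e. the 2-form det(W, ·, ·) is moving with the fluid if and only if W = F W₀ / det F. -/

import Mathlib

noncomputable section

local notation "E3" => EuclideanSpace ℝ (Fin 3)

/-- divergence of a vector field: trace of its Fréchet derivative. -/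
def divv (w : E3 → E3) (x : E3) : ℝ :=
  LinearMap.trace ℝ E3 (fderiv ℝ w x : E3 →ₗ[ℝ] E3)
open Set Filter Topology MeasureTheory
open scoped Interval

/-- A Grönwall estimate that needs the Lipschitz bound only in a tube around one trajectory. -/
theorem norm_sub_le_of_trajectories_of_tube {E : Type*} [NormedAddCommGroup E] [NormedSpace ℝ E]
    {v : ℝ → E → E} {x y : ℝ → E} {a b K δ r : ℝ} (hK : 0 ≤ K)
    (hv : ∀ t ∈ Icc a b, ∀ z, ‖z - x t‖ ≤ r → ‖v t z - v t (x t)‖ ≤ K * ‖z - x t‖)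
    (hx : ∀ t, HasDerivAt x (v t (x t)) t) (hy : ∀ t, HasDerivAt y (v t (y t)) t)
    (hδ : 0 < δ) (h0 : ‖y a - x a‖ ≤ δ) (hr : δ * Real.exp ((K + 1) * (b - a)) ≤ r) :
    ∀ t ∈ Icc a b, ‖y t - x t‖ ≤ δ * Real.exp ((K + 1) * (t - a)) := by
  have hd : ∀ t, HasDerivAt (fun t => y t - x t) (v t (y t) - v t (x t)) t :=
    fun t => (hy t).sub (hx t)
  have hB : ∀ t, HasDerivAt (fun t => δ * Real.exp ((K + 1) * (t - a)))
      ((K + 1) * (δ * Real.exp ((K + 1) * (t - a)))) t := by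
    intro t
    have h := ((((hasDerivAt_id t).sub_const a).const_mul (K + 1)).exp).const_mul δ
    exact h.congr_deriv (by simp only [id]; ring)
  refine image_norm_le_of_norm_deriv_right_lt_deriv_boundary
    (fun t _ => (hd t).continuousAt.continuousWithinAt)
    (fun t _ => (hd t).hasDerivWithinAt) (by simpa using h0) hB ?_
  intro t ht heq
  have hpos : 0 < δ * Real.exp ((K + 1) * (t - a)) := by positivity
  have hle : ‖y t - x t‖ ≤ r := by
    rw [heq]
    refine le_trans ?_ hr
    have := ht.2.le
    gcongr
  have := hv t (Ico_subset_Icc_self ht) (y t) hle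
  rw [heq] at this
  linarith

theorem exists_lipschitz_bound_on_tube {E : Type*} [NormedAddCommGroup E] [NormedSpace ℝ E]
    [FiniteDimensional ℝ E] {v : ℝ → E → E} (hv : ContDiff ℝ 1 (Function.uncurry v))
    {x : ℝ → E} (hx : Continuous x) (a b : ℝ) :
    ∃ K : ℝ, 0 ≤ K ∧ ∀ t ∈ Icc a b, ∀ z, ‖z - x t‖ ≤ 1 →
      ‖v t z - v t (x t)‖ ≤ K * ‖z - x t‖ := by
  obtain ⟨R, hR⟩ := (isCompact_Icc (a := a) (b := b)).exists_bound_of_continuousOn hx.continuousOn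
  have hc : IsCompact (Icc a b ×ˢ Metric.closedBall (0 : E) (R + 1)) :=
    isCompact_Icc.prod (isCompact_closedBall _ _)
  obtain ⟨K, hK⟩ := LocallyLipschitzOn.exists_lipschitzOnWith_of_compact hc
    (hv.locallyLipschitz.locallyLipschitzOn)
  refine ⟨K, K.2, fun t ht z hz => ?_⟩
  have hxt := hR t ht
  have h := hK.dist_le_mul (t, z) ⟨ht, ?_⟩ (t, x t) ⟨ht, ?_⟩
  · simpa [dist_eq_norm, Prod.norm_def] using h
  · have := norm_add_le (z - x t) (x t)
    rw [sub_add_cancel] at this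
    simp only [Metric.mem_closedBall, dist_zero_right]
    linarith
  · simp only [Metric.mem_closedBall, dist_zero_right]
    linarith

theorem hasFDerivAt_of_uncurry {E G : Type*} [NormedAddCommGroup E] [NormedSpace ℝ E]
    [NormedAddCommGroup G] [NormedSpace ℝ G] {v : ℝ → E → G}
    (hv : ContDiff ℝ 1 (Function.uncurry v)) (t : ℝ) (x : E) :
    HasFDerivAt (v t) (fderiv ℝ (v t) x) x :=
  ((hv.comp (contDiff_const.prodMk contDiff_id : ContDiff ℝ 1 fun z : E => (t, z))).differentiable
    one_ne_zero x).hasFDerivAt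

theorem continuous_fderiv_of_uncurry {E G : Type*} [NormedAddCommGroup E] [NormedSpace ℝ E]
    [NormedAddCommGroup G] [NormedSpace ℝ G] {v : ℝ → E → G}
    (hv : ContDiff ℝ 1 (Function.uncurry v)) {x : ℝ → E} (hx : Continuous x) :
    Continuous fun t => fderiv ℝ (v t) (x t) := by
  have h : ∀ t, fderiv ℝ (v t) (x t) =
      (fderiv ℝ (Function.uncurry v) (t, x t)).comp (ContinuousLinearMap.inr ℝ ℝ E) := by
    intro t
    have h1 := (hv.differentiable one_ne_zero (t, x t)).hasFDerivAt
    exact (h1.comp (x t) (hasFDerivAt_prodMk_right t (x t))).fderiv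
  simp_rw [h]
  have := (hv.continuous_fderiv one_ne_zero).comp (continuous_id.prodMk hx)
  exact this.clm_comp continuous_const

/-- The first variation of a flow: the spatial derivative of the flow map solves the linearised
equation along each trajectory. -/
theorem hasDerivAt_fderiv_flow {E : Type*} [NormedAddCommGroup E] [NormedSpace ℝ E]
    [FiniteDimensional ℝ E] {v φ : ℝ → E → E} (hv : ContDiff ℝ 1 (Function.uncurry v))
    (hφt : ∀ t X, HasDerivAt (fun τ => φ τ X) (v t (φ t X)) t)
    (hφ : ∀ t, Differentiable ℝ (φ t)) (X h : E) (t : ℝ) :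
    HasDerivAt (fun τ => fderiv ℝ (φ τ) X h)
      (fderiv ℝ (v t) (φ t X) (fderiv ℝ (φ t) X h)) t := by
  have hcφ : ∀ Y, Continuous fun τ => φ τ Y := fun Y =>
    continuous_iff_continuousAt.2 fun τ => (hφt τ Y).continuousAt
  obtain ⟨a, ha⟩ : ∃ a, a = t - 1 := ⟨_, rfl⟩
  obtain ⟨b, hb⟩ : ∃ b, b = t + 1 := ⟨_, rfl⟩
  have hta : a < t := by linarith
  have htb : t < b := by linarith
  obtain ⟨K, hK0, hK⟩ := exists_lipschitz_bound_on_tube hv (hcφ X) a b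
  set s : ℕ → ℝ := fun n => 1 / ((n : ℝ) + 1) with hs
  have hs0 : ∀ n, 0 < s n := fun n => Nat.one_div_pos_of_nat
  have hslim : Tendsto s atTop (𝓝 0) := tendsto_one_div_add_atTop_nhds_zero_nat
  have hsne : Tendsto s atTop (𝓝[≠] 0) :=
    tendsto_nhdsWithin_iff.2 ⟨hslim, Eventually.of_forall fun n => (hs0 n).ne'⟩
  have hpath : ∀ τ, HasDerivAt (fun σ : ℝ => φ τ (X + σ • h)) (fderiv ℝ (φ τ) X h) 0 := by
    intro τ
    have h1 : HasDerivAt (fun σ : ℝ => X + σ • h) h 0 := by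
      simpa using ((hasDerivAt_id (0 : ℝ)).smul_const h).const_add X
    have h2 : HasFDerivAt (φ τ) (fderiv ℝ (φ τ) X) (X + (0 : ℝ) • h) := by
      simpa using (hφ τ X).hasFDerivAt
    exact h2.comp_hasDerivAt 0 h1
  have hquot : ∀ τ, Tendsto (fun n => (s n)⁻¹ • (φ τ (X + s n • h) - φ τ X)) atTop
      (𝓝 (fderiv ℝ (φ τ) X h)) := by
    intro τ
    have := (hasDerivAt_iff_tendsto_slope_zero.1 (hpath τ)).comp hsne
    simpa [Function.comp_def] using this
  have hquotv : ∀ τ, Tendsto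
      (fun n => (s n)⁻¹ • (v τ (φ τ (X + s n • h)) - v τ (φ τ X))) atTop
      (𝓝 (fderiv ℝ (v τ) (φ τ X) (fderiv ℝ (φ τ) X h))) := by
    intro τ
    have h2 : HasFDerivAt (v τ) (fderiv ℝ (v τ) (φ τ X)) (φ τ (X + (0 : ℝ) • h)) := by
      simpa using hasFDerivAt_of_uncurry hv τ (φ τ X)
    have h3 := h2.comp_hasDerivAt 0 (hpath τ)
    have := (hasDerivAt_iff_tendsto_slope_zero.1 h3).comp hsne
    simpa [Function.comp_def] using this
  obtain ⟨C, hC0, hC⟩ : ∃ C : ℝ, 0 < C ∧ ∀ᶠ n in atTop, ‖φ a (X + s n • h) - φ a X‖ ≤ C * s n := by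
    refine ⟨‖fderiv ℝ (φ a) X h‖ + 1, by positivity, ?_⟩
    filter_upwards [(hquot a).norm.eventually_lt_const (lt_add_one _)] with n hn
    rw [norm_smul, norm_inv, Real.norm_of_nonneg (hs0 n).le, inv_mul_lt_iff₀ (hs0 n)] at hn
    linarith
  set L := Real.exp ((K + 1) * (b - a)) with hL
  have hsmall : ∀ᶠ n in atTop, C * s n * L ≤ 1 := by
    have : Tendsto (fun n => C * s n * L) atTop (𝓝 (C * 0 * L)) :=
      (hslim.const_mul C).mul_const L
    rw [mul_zero, zero_mul] at this
    exact this.eventually_le_const one_pos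
  have hbound : ∀ᶠ n in atTop, ∀ τ ∈ Icc a b,
      ‖(s n)⁻¹ • (v τ (φ τ (X + s n • h)) - v τ (φ τ X))‖ ≤ K * (C * L) := by
    filter_upwards [hC, hsmall] with n hn1 hn2 τ hτ
    have hpos : 0 < C * s n := mul_pos hC0 (hs0 n)
    have h1 := norm_sub_le_of_trajectories_of_tube hK0 hK (fun τ => hφt τ X)
      (fun τ => hφt τ (X + s n • h)) hpos hn1 hn2 τ hτ
    have h2 : ‖φ τ (X + s n • h) - φ τ X‖ ≤ C * s n * L := by
      refine h1.trans ?_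
      have := hτ.2
      rw [hL]
      gcongr
    have h3 := hK τ hτ _ (h2.trans hn2)
    rw [norm_smul, norm_inv, Real.norm_of_nonneg (hs0 n).le, inv_mul_le_iff₀ (hs0 n)]
    calc _ ≤ K * (C * s n * L) := h3.trans (by gcongr)
      _ = _ := by ring
  have hcv : ∀ Y, Continuous fun τ => v τ (φ τ Y) := fun Y =>
    hv.continuous.comp (continuous_id.prodMk (hcφ Y))
  set g : ℝ → E := fun τ => fderiv ℝ (v τ) (φ τ X) (fderiv ℝ (φ τ) X h) with hg
  have hab : a ≤ b := by linarith
  have hgm : AEStronglyMeasurable g (volume.restrict (Ι a b)) :=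
    aestronglyMeasurable_of_tendsto_ae atTop
      (fun n => (((hcv (X + s n • h)).sub (hcv X)).const_smul (s n)⁻¹).aestronglyMeasurable)
      (Eventually.of_forall hquotv)
  have hgb : ∀ τ ∈ Icc a b, ‖g τ‖ ≤ K * (C * L) := fun τ hτ =>
    le_of_tendsto (hquotv τ).norm (hbound.mono fun n hn => hn τ hτ)
  have hgi : IntervalIntegrable g volume a b := by
    refine (intervalIntegrable_const (c := K * (C * L))).mono_fun' hgm ?_
    refine (ae_restrict_mem measurableSet_uIoc).mono fun τ hτ => hgb τ ?_
    rw [uIoc_of_le hab] at hτ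
    exact Ioc_subset_Icc_self hτ
  have hint : ∀ τ ∈ Icc a b, fderiv ℝ (φ τ) X h = fderiv ℝ (φ a) X h + ∫ σ in a..τ, g σ := by
    intro τ hτ
    have hlim := intervalIntegral.tendsto_integral_filter_of_dominated_convergence
      (μ := volume) (a := a) (b := τ) (l := atTop)
      (F := fun n σ => (s n)⁻¹ • (v σ (φ σ (X + s n • h)) - v σ (φ σ X))) (f := g)
      (fun _ => K * (C * L))
      (Eventually.of_forall fun n =>
        (((hcv (X + s n • h)).sub (hcv X)).const_smul (s n)⁻¹).aestronglyMeasurable)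
      (hbound.mono fun n hn => Eventually.of_forall fun σ hσ => by
        rw [uIoc_of_le hτ.1] at hσ
        exact hn σ ⟨hσ.1.le, hσ.2.trans hτ.2⟩)
      intervalIntegrable_const (Eventually.of_forall fun σ _ => hquotv σ)
    have heq : ∀ n, ∫ σ in a..τ, (s n)⁻¹ • (v σ (φ σ (X + s n • h)) - v σ (φ σ X)) =
        (s n)⁻¹ • (φ τ (X + s n • h) - φ τ X) - (s n)⁻¹ • (φ a (X + s n • h) - φ a X) := fun n =>
      (intervalIntegral.integral_eq_sub_of_hasDerivAt
        (f := fun σ => (s n)⁻¹ • (φ σ (X + s n • h) - φ σ X))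
        (f' := fun σ => (s n)⁻¹ • (v σ (φ σ (X + s n • h)) - v σ (φ σ X)))
        (fun σ _ => ((hφt σ (X + s n • h)).sub (hφt σ X)).const_smul (s n)⁻¹)
        (Continuous.intervalIntegrable
          (((hcv (X + s n • h)).sub (hcv X)).const_smul (s n)⁻¹) _ _))
    simp_rw [heq] at hlim
    rw [tendsto_nhds_unique hlim ((hquot τ).sub (hquot a))]
    abel
  have hFc : ContinuousOn (fun τ => fderiv ℝ (φ τ) X h) (Icc a b) := by
    refine ContinuousOn.congr ?_ hint
    have := intervalIntegral.continuousOn_primitive_interval' hgi left_mem_uIcc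
    rw [uIcc_of_le hab] at this
    exact continuousOn_const.add this
  have hgc : ContinuousOn g (Icc a b) :=
    (continuous_fderiv_of_uncurry hv (hcφ X)).continuousOn.clm_apply hFc
  have hnhds : Icc a b ∈ 𝓝 t := Icc_mem_nhds hta htb
  have hder : HasDerivAt (fun τ => fderiv ℝ (φ a) X h + ∫ σ in a..τ, g σ) (g t) t := by
    refine (intervalIntegral.integral_hasDerivAt_right ?_ ?_ (hgc.continuousAt hnhds)).const_add _
    · exact hgi.mono_set (by
        rw [uIcc_of_le hab, uIcc_of_le hta.le]
        exact Icc_subset_Icc_right htb.le)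
    · exact ⟨Icc a b, hnhds, hgc.aestronglyMeasurable measurableSet_Icc⟩
  exact hder.congr_of_eventuallyEq (by filter_upwards [hnhds] with τ hτ using hint τ hτ)

/-- Liouville's formula in dimension three. -/
theorem hasDerivAt_det_of_linear {M : ℝ → E3 →ₗ[ℝ] E3} {A : E3 →ₗ[ℝ] E3} {t : ℝ}
    (hM : ∀ h, HasDerivAt (fun τ => M τ h) (A (M t h)) t) :
    HasDerivAt (fun τ => LinearMap.det (M τ)) (LinearMap.trace ℝ E3 A * LinearMap.det (M t)) t := by
  let b := (EuclideanSpace.basisFun (Fin 3) ℝ).toBasis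
  have hmul : LinearMap.toMatrix b b (A ∘ₗ M t) =
      LinearMap.toMatrix b b A * LinearMap.toMatrix b b (M t) := LinearMap.toMatrix_comp b b b _ _
  have hent : ∀ i j, HasDerivAt (fun τ => LinearMap.toMatrix b b (M τ) i j)
      ((LinearMap.toMatrix b b A * LinearMap.toMatrix b b (M t)) i j) t := by
    intro i j
    rw [← hmul]
    have h := (EuclideanSpace.proj i : E3 →L[ℝ] ℝ).hasFDerivAt.comp_hasDerivAt
      t (hM (b j))
    simpa [LinearMap.toMatrix_apply, b, Function.comp_def] using h
  rw [LinearMap.trace_eq_matrix_trace ℝ b]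
  simp_rw [← LinearMap.det_toMatrix b]
  generalize LinearMap.toMatrix b b A = P at hent ⊢
  simp only [Matrix.det_fin_three]
  have h := ((((((((hent 0 0).mul (hent 1 1)).mul (hent 2 2)).sub
    (((hent 0 0).mul (hent 1 2)).mul (hent 2 1))).sub
    (((hent 0 1).mul (hent 1 0)).mul (hent 2 2))).add
    (((hent 0 1).mul (hent 1 2)).mul (hent 2 0))).add
    (((hent 0 2).mul (hent 1 0)).mul (hent 2 1))).sub
    (((hent 0 2).mul (hent 1 1)).mul (hent 2 0)))
  refine h.congr_deriv ?_
  simp only [Matrix.trace_fin_three, Matrix.mul_apply, Fin.sum_univ_three, Pi.mul_apply]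
  ring

/-- Uniqueness for the linear equation `y' = A y` with continuous coefficients on the line. -/
theorem eq_of_hasDerivAt_linear {E : Type*} [NormedAddCommGroup E] [NormedSpace ℝ E]
    {A : ℝ → E →L[ℝ] E} (hA : Continuous A) {y z : ℝ → E}
    (hy : ∀ t, HasDerivAt y (A t (y t)) t) (hz : ∀ t, HasDerivAt z (A t (z t)) t)
    {t₀ : ℝ} (h0 : y t₀ = z t₀) : y = z := by
  funext t
  obtain ⟨R, hR⟩ := (isCompact_Icc (a := min t t₀ - 1) (b := max t t₀ + 1)).exists_bound_of_continuousOn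
    hA.continuousOn
  have hmem : ∀ τ, min t t₀ ≤ τ → τ ≤ max t t₀ → τ ∈ Ioo (min t t₀ - 1) (max t t₀ + 1) :=
    fun τ h1 h2 => ⟨by linarith, by linarith⟩
  refine ODE_solution_unique_of_mem_Ioo (v := fun t x => A t x) (s := fun _ => univ)
    (K := R.toNNReal) (fun τ hτ => ?_)
    (hmem t₀ (min_le_right _ _) (le_max_right _ _)) (fun τ _ => ⟨hy τ, trivial⟩)
    (fun τ _ => ⟨hz τ, trivial⟩) h0 (hmem t (min_le_left _ _) (le_max_left _ _))
  refine ((A τ).lipschitz.weaken ?_).lipschitzOnWith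
  rw [← NNReal.coe_le_coe, coe_nnnorm]
  exact (hR τ (Ioo_subset_Icc_self hτ)).trans (Real.le_coe_toNNReal R)

theorem hasDerivAt_along_curve {E G : Type*} [NormedAddCommGroup E] [NormedSpace ℝ E]
    [NormedAddCommGroup G] [NormedSpace ℝ G] {W : ℝ → E → G}
    (hW : ContDiff ℝ 1 (Function.uncurry W)) {x : ℝ → E} {x' : E} {t : ℝ}
    (hx : HasDerivAt x x' t) :
    HasDerivAt (fun τ => W τ (x τ))
      (deriv (fun τ => W τ (x t)) t + fderiv ℝ (W t) (x t) x') t := by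
  have hD := (hW.differentiable one_ne_zero (t, x t)).hasFDerivAt
  have h1 : HasDerivAt (fun τ => W τ (x τ)) (fderiv ℝ (Function.uncurry W) (t, x t) (1, x')) t :=
    HasFDerivAt.comp_hasDerivAt (x := t) (f := fun τ => (τ, x τ)) hD
      ((hasDerivAt_id t).prodMk hx)
  have h2 : HasDerivAt (fun τ => W τ (x t)) (fderiv ℝ (Function.uncurry W) (t, x t) (1, 0)) t :=
    HasFDerivAt.comp_hasDerivAt (x := t) (f := fun τ => (τ, x t)) hD
      ((hasDerivAt_id t).prodMk (hasDerivAt_const t (x t)))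
  have h3 : HasFDerivAt (W t) ((fderiv ℝ (Function.uncurry W) (t, x t)).comp
      (ContinuousLinearMap.inr ℝ ℝ E)) (x t) := hD.comp (x t) (hasFDerivAt_prodMk_right t (x t))
  rw [h2.deriv, h3.fderiv]
  convert h1 using 1
  simp [← map_add]

/-- The 2-form `det(W, ·, ·)` is moving with the fluid
iff `W = F W₀ / det F`. -/
theorem two_form_moving_with_fluid_iff
    (u φ : ℝ → E3 → E3)
    (F : ℝ → E3 → (E3 ≃L[ℝ] E3))
    (hu : ContDiff ℝ (⊤ : ℕ∞) (Function.uncurry u))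
    (hφ0 : ∀ X, φ 0 X = X)
    (hφt : ∀ t X, HasDerivAt (fun τ => φ τ X) (u t (φ t X)) t)
    (hφsmooth : ∀ t, ContDiff ℝ (⊤ : ℕ∞) (φ t))
    (hφbij : ∀ t, Function.Bijective (φ t))
    (hφinv : ∀ t, ContDiff ℝ (⊤ : ℕ∞) (Function.invFun (φ t)))
    (hF : ∀ t X, (F t X : E3 →L[ℝ] E3) = fderiv ℝ (φ t) X)
    (W : ℝ → E3 → E3)
    (hW : ContDiff ℝ 1 (Function.uncurry W)) :
    (∀ t x, deriv (fun τ => W τ x) t + fderiv ℝ (W t) x (u t x)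
        + divv (u t) x • W t x - fderiv ℝ (u t) x (W t x) = 0) ↔
      (∀ t X, LinearMap.det ((F t X : E3 →L[ℝ] E3) : E3 →ₗ[ℝ] E3) • W t (φ t X)
          = F t X (W 0 X)) := by
  have hu1 : ContDiff ℝ 1 (Function.uncurry u) := hu.of_le (by exact_mod_cast le_top)
  have hF' : ∀ X h t, HasDerivAt (fun τ => F τ X h) (fderiv ℝ (u t) (φ t X) (F t X h)) t := by
    intro X h t
    have := hasDerivAt_fderiv_flow hu1 hφt
      (fun t => (hφsmooth t).differentiable (by simp)) X h t
    simpa only [← hF, ContinuousLinearEquiv.coe_coe] using this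
  have hJ : ∀ X t, HasDerivAt
      (fun τ => LinearMap.det ((F τ X : E3 →L[ℝ] E3) : E3 →ₗ[ℝ] E3))
      (divv (u t) (φ t X) * LinearMap.det ((F t X : E3 →L[ℝ] E3) : E3 →ₗ[ℝ] E3)) t :=
    fun X t => hasDerivAt_det_of_linear (fun h => hF' X h t)
  have hJW : ∀ X t, HasDerivAt
      (fun τ => LinearMap.det ((F τ X : E3 →L[ℝ] E3) : E3 →ₗ[ℝ] E3) • W τ (φ τ X)) _ t :=
    fun X t => (hJ X t).smul (hasDerivAt_along_curve hW (hφt t X))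
  have hcφ : ∀ X, Continuous fun τ => φ τ X := fun X =>
    continuous_iff_continuousAt.2 fun τ => (hφt τ X).continuousAt
  constructor
  · intro hL t X
    refine congrFun (eq_of_hasDerivAt_linear (t₀ := 0)
      (A := fun τ => fderiv ℝ (u τ) (φ τ X))
      (y := fun τ => LinearMap.det ((F τ X : E3 →L[ℝ] E3) : E3 →ₗ[ℝ] E3) • W τ (φ τ X))
      (z := fun τ => F τ X (W 0 X))
      (continuous_fderiv_of_uncurry hu1 (hcφ X)) (fun τ => ?_) (fun τ => hF' X _ τ) ?_) t
    · refine (hJW X τ).congr_deriv ?_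
      have h := hL τ (φ τ X)
      rw [sub_eq_zero] at h
      rw [map_smul, ← h]
      module
    · have hid : (F 0 X : E3 →L[ℝ] E3) = ContinuousLinearMap.id ℝ E3 := by
        rw [hF, show φ 0 = id from funext hφ0, fderiv_id]
      have hid' : F 0 X (W 0 X) = W 0 X := by
        simpa using DFunLike.congr_fun hid (W 0 X)
      simp only [hid, hid', hφ0]
      simp
  · intro hM t x
    obtain ⟨X, rfl⟩ := (hφbij t).2 x
    have hne : LinearMap.det ((F t X : E3 →L[ℝ] E3) : E3 →ₗ[ℝ] E3) ≠ 0 :=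
      (LinearEquiv.isUnit_det' (F t X).toLinearEquiv).ne_zero
    have hd := hJW X t
    have heq := (hd.congr_of_eventuallyEq (Eventually.of_forall fun τ => (hM τ X).symm)).unique
      (hF' X (W 0 X) t)
    rw [← hM t X, map_smul] at heq
    refine (smul_eq_zero.1 ?_).resolve_left hne
    rw [smul_sub, ← heq]
    module
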